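/- Let ρ_CTN = (E_A ⊗ E_B ⊗ E_C)(ρ_BTN) be a triangle network state with local channels, where ρ_BTN is a basic triangle network state and E_A, E_B, E_C are quantum channels from the parties' d²-dimensional systems to C^{n_A}, C^{n_B}, C^{n_C}. Let {A_i}, {B_j}, {C_k} be finite families of Hermitian observables on C^{n_A}, C^{n_B}, C^{n_C}, and let γ_E, γ_F, γ_G denote the off-diagonal blocks of Γ({A_i, B_j, C_k}, ρ_CTN) between the A–B, A–C and B–C sectors. Then there exist Hermitian matrices Υ^A_1, Υ^A_2 (of size equal to the number of A-observables), Υ^B_1, Υ^B_2, Υ^C_1, Υ^C_2 such that Γ({A_i, B_j, C_k}, ρ_CTN) = S_c + S_b + S_a, where S_c has diagonal blocks (Υ^A_2, Υ^B_1, 0), off-diagonal block γ_E between A and B (and γ_E† between B and A) and zeros elsewhere; S_b has diagonal blocks (Υ^A_1, 0, Υ^C_2) and off-diagonal block γ_F between A and C; S_a has diagonal blocks (0, Υ^B_2, Υ^C_1) and off-diagonal block γ_G between B and C; and each of S_a, S_b, S_c is positive semidefinite. -/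

import Mathlib

open Matrix Kronecker BigOperators
open scoped ComplexOrder

noncomputable section

/-- Covariance matrix of a family of observables `M` in the state `ρ`. -/
def covMat {n ι : Type*} [Fintype n] (M : ι → Matrix n n ℂ) (ρ : Matrix n n ℂ) :
    Matrix ι ι ℂ :=
  Matrix.of fun i j => (M i * M j * ρ).trace - (M i * ρ).trace * (M j * ρ).trace

/-- A density matrix: positive semidefinite with unit trace. -/
def IsDensity {n : Type*} [Fintype n] (ρ : Matrix n n ℂ) : Prop :=
  ρ.PosSemidef ∧ ρ.trace = 1

/-- Partial trace over the first tensor factor. -/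
def ptrace₁ {m n : Type*} [Fintype m] (M : Matrix (m × n) (m × n) ℂ) : Matrix n n ℂ :=
  Matrix.of fun i j => ∑ k, M (k, i) (k, j)

/-- Partial trace over the second tensor factor. -/
def ptrace₂ {m n : Type*} [Fintype n] (M : Matrix (m × n) (m × n) ℂ) : Matrix m m ℂ :=
  Matrix.of fun i j => ∑ k, M (i, k) (j, k)

/-- Index of a two-qudit space. -/
abbrev D2 (d : ℕ) := Fin d × Fin d

/-- Index of the six-factor triangle-network space, ordered C₂, A₁, A₂, B₁, B₂, C₁. -/
abbrev TriIdx (d : ℕ) := D2 d × (D2 d × D2 d)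

/-- The basic triangle network state `ρ_b ⊗ ρ_c ⊗ ρ_a`. -/
def btnState {d : ℕ} (ρa ρb ρc : Matrix (D2 d) (D2 d) ℂ) :
    Matrix (TriIdx d) (TriIdx d) ℂ :=
  ρb ⊗ₖ (ρc ⊗ₖ ρa)

/-- Embed an observable of Alice (acting on A₁A₂) into the global space. -/
def embedA {d : ℕ} (M : Matrix (D2 d) (D2 d) ℂ) : Matrix (TriIdx d) (TriIdx d) ℂ :=
  Matrix.of fun p q =>
    if p.1.1 = q.1.1 ∧ p.2.1.2 = q.2.1.2 ∧ p.2.2 = q.2.2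
    then M (p.1.2, p.2.1.1) (q.1.2, q.2.1.1) else 0

/-- Embed an observable of Bob (acting on B₁B₂) into the global space. -/
def embedB {d : ℕ} (M : Matrix (D2 d) (D2 d) ℂ) : Matrix (TriIdx d) (TriIdx d) ℂ :=
  Matrix.of fun p q =>
    if p.1 = q.1 ∧ p.2.1.1 = q.2.1.1 ∧ p.2.2.2 = q.2.2.2
    then M (p.2.1.2, p.2.2.1) (q.2.1.2, q.2.2.1) else 0

/-- Embed an observable of Charlie (acting on C₁C₂) into the global space. -/
def embedC {d : ℕ} (M : Matrix (D2 d) (D2 d) ℂ) : Matrix (TriIdx d) (TriIdx d) ℂ :=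
  Matrix.of fun p q =>
    if p.1.2 = q.1.2 ∧ p.2.1 = q.2.1 ∧ p.2.2.1 = q.2.2.1
    then M (p.2.2.2, p.1.1) (q.2.2.2, q.1.1) else 0

section marginals
variable {d : ℕ} (ρa ρb ρc : Matrix (D2 d) (D2 d) ℂ)

/-- Marginal of ρ_BTN on A₁ (second factor of ρ_b = ρ^{C₂A₁}). -/
def margA1 : Matrix (Fin d) (Fin d) ℂ := ptrace₁ ρb
/-- Marginal on C₂. -/
def margC2 : Matrix (Fin d) (Fin d) ℂ := ptrace₂ ρb
/-- Marginal on A₂ (first factor of ρ_c = ρ^{A₂B₁}). -/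
def margA2 : Matrix (Fin d) (Fin d) ℂ := ptrace₂ ρc
/-- Marginal on B₁. -/
def margB1 : Matrix (Fin d) (Fin d) ℂ := ptrace₁ ρc
/-- Marginal on B₂ (first factor of ρ_a = ρ^{B₂C₁}). -/
def margB2 : Matrix (Fin d) (Fin d) ℂ := ptrace₂ ρa
/-- Marginal on C₁. -/
def margC1 : Matrix (Fin d) (Fin d) ℂ := ptrace₁ ρa

/-- Reduced observable A^(2) = tr_{A₁}(A (ρ^{A₁} ⊗ 1)). -/
def redA2 (M : Matrix (D2 d) (D2 d) ℂ) : Matrix (Fin d) (Fin d) ℂ :=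
  ptrace₁ (M * (margA1 ρb ⊗ₖ (1 : Matrix (Fin d) (Fin d) ℂ)))
/-- Reduced observable A^(1) = tr_{A₂}(A (1 ⊗ ρ^{A₂})). -/
def redA1 (M : Matrix (D2 d) (D2 d) ℂ) : Matrix (Fin d) (Fin d) ℂ :=
  ptrace₂ (M * ((1 : Matrix (Fin d) (Fin d) ℂ) ⊗ₖ margA2 ρc))
/-- Reduced observable B^(1) = tr_{B₂}(B (1 ⊗ ρ^{B₂})). -/
def redB1 (M : Matrix (D2 d) (D2 d) ℂ) : Matrix (Fin d) (Fin d) ℂ :=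
  ptrace₂ (M * ((1 : Matrix (Fin d) (Fin d) ℂ) ⊗ₖ margB2 ρa))
/-- Reduced observable B^(2) = tr_{B₁}(B (ρ^{B₁} ⊗ 1)). -/
def redB2 (M : Matrix (D2 d) (D2 d) ℂ) : Matrix (Fin d) (Fin d) ℂ :=
  ptrace₁ (M * (margB1 ρc ⊗ₖ (1 : Matrix (Fin d) (Fin d) ℂ)))
/-- Reduced observable C^(1) = tr_{C₂}(C (1 ⊗ ρ^{C₂})); here C acts on C₁C₂. -/
def redC1 (M : Matrix (D2 d) (D2 d) ℂ) : Matrix (Fin d) (Fin d) ℂ :=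
  ptrace₂ (M * ((1 : Matrix (Fin d) (Fin d) ℂ) ⊗ₖ margC2 ρb))
/-- Reduced observable C^(2) = tr_{C₁}(C (ρ^{C₁} ⊗ 1)). -/
def redC2 (M : Matrix (D2 d) (D2 d) ℂ) : Matrix (Fin d) (Fin d) ℂ :=
  ptrace₁ (M * (margC1 ρa ⊗ₖ (1 : Matrix (Fin d) (Fin d) ℂ)))

end marginals


/-- The global Kraus operator `K_A ⊗ K_B ⊗ K_C`, mapping the six-factor
triangle-network space (ordered C₂, A₁, A₂, B₁, B₂, C₁) to the output space
of the three parties. -/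
def globalKraus {d nA nB nC : ℕ}
    (KA : Matrix (Fin nA) (D2 d) ℂ) (KB : Matrix (Fin nB) (D2 d) ℂ)
    (KC : Matrix (Fin nC) (D2 d) ℂ) :
    Matrix (Fin nA × Fin nB × Fin nC) (TriIdx d) ℂ :=
  Matrix.of fun o i =>
    KA o.1 (i.1.2, i.2.1.1) * KB o.2.1 (i.2.1.2, i.2.2.1) * KC o.2.2 (i.2.2.2, i.1.1)

/-- The triangle network state with local channels,
`(E_A ⊗ E_B ⊗ E_C)(ρ_BTN)`, with the channels given by Kraus operators. -/
def ctnState {d nA nB nC LA LB LC : ℕ}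
    (ρa ρb ρc : Matrix (D2 d) (D2 d) ℂ)
    (KA : Fin LA → Matrix (Fin nA) (D2 d) ℂ)
    (KB : Fin LB → Matrix (Fin nB) (D2 d) ℂ)
    (KC : Fin LC → Matrix (Fin nC) (D2 d) ℂ) :
    Matrix (Fin nA × Fin nB × Fin nC) (Fin nA × Fin nB × Fin nC) ℂ :=
  ∑ l, ∑ m, ∑ n,
    globalKraus (KA l) (KB m) (KC n) * btnState ρa ρb ρc *
      (globalKraus (KA l) (KB m) (KC n))ᴴ

/-- Embed an observable of Alice into the tripartite output space. -/
def outA {nA nB nC : ℕ} (M : Matrix (Fin nA) (Fin nA) ℂ) :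
    Matrix (Fin nA × Fin nB × Fin nC) (Fin nA × Fin nB × Fin nC) ℂ :=
  M ⊗ₖ (1 : Matrix (Fin nB × Fin nC) (Fin nB × Fin nC) ℂ)

/-- Embed an observable of Bob into the tripartite output space. -/
def outB {nA nB nC : ℕ} (M : Matrix (Fin nB) (Fin nB) ℂ) :
    Matrix (Fin nA × Fin nB × Fin nC) (Fin nA × Fin nB × Fin nC) ℂ :=
  Matrix.of fun p q => if p.1 = q.1 ∧ p.2.2 = q.2.2 then M p.2.1 q.2.1 else 0

/-- Embed an observable of Charlie into the tripartite output space. -/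
def outC {nA nB nC : ℕ} (M : Matrix (Fin nC) (Fin nC) ℂ) :
    Matrix (Fin nA × Fin nB × Fin nC) (Fin nA × Fin nB × Fin nC) ℂ :=
  (1 : Matrix (Fin nA) (Fin nA) ℂ) ⊗ₖ ((1 : Matrix (Fin nB) (Fin nB) ℂ) ⊗ₖ M)


theorem gram_psd {ι p q : Type*} [Fintype ι] [Fintype p] [Fintype q]
    (D : ι → Matrix p q ℂ) (ρ : Matrix q q ℂ) (hρ : ρ.PosSemidef) :
    (Matrix.of fun i j => ((D i)ᴴ * D j * ρ).trace).PosSemidef := by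
  apply Matrix.PosSemidef.of_dotProduct_mulVec_nonneg
  · ext i j
    simp only [conjTranspose_apply, of_apply, ← trace_conjTranspose, conjTranspose_mul,
      conjTranspose_conjTranspose, hρ.isHermitian.eq]
    rw [trace_mul_comm]
  · intro x
    have h : star x ⬝ᵥ (Matrix.of fun i j => ((D i)ᴴ * D j * ρ).trace) *ᵥ x
        = ((∑ i, x i • D i) * ρ * (∑ i, x i • D i)ᴴ).trace := by
      rw [trace_mul_comm, ← Matrix.mul_assoc, conjTranspose_sum]
      simp only [dotProduct, mulVec, of_apply, Finset.mul_sum, Matrix.sum_mul, Matrix.mul_sum, trace_sum,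
        conjTranspose_smul, Matrix.smul_mul, Matrix.mul_smul, trace_smul, Pi.star_apply,
        smul_eq_mul]
      rw [Finset.sum_comm]
      refine Finset.sum_congr rfl fun i _ => Finset.sum_congr rfl fun j _ => by ring
    rw [h]
    exact (hρ.mul_mul_conjTranspose_same _).trace_nonneg

theorem trace_real {q : Type*} [Fintype q] {M ρ : Matrix q q ℂ} (hM : M.IsHermitian)
    (hρ : ρ.IsHermitian) : star (M * ρ).trace = (M * ρ).trace := by
  rw [← trace_conjTranspose, conjTranspose_mul, hM.eq, hρ.eq, trace_mul_comm]

theorem cov_psd {ι q : Type*} [Fintype ι] [Fintype q] [DecidableEq q]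
    (M : ι → Matrix q q ℂ) (hM : ∀ i, (M i).IsHermitian) (ρ : Matrix q q ℂ)
    (hρ : IsDensity ρ) : (covMat M ρ).PosSemidef := by
  have := gram_psd (fun i => M i - (M i * ρ).trace • (1 : Matrix q q ℂ)) ρ hρ.1
  convert this using 1
  ext i j
  simp only [covMat, of_apply, conjTranspose_sub, conjTranspose_smul, conjTranspose_one,
    (hM i).eq, trace_real (hM i) hρ.1.isHermitian, Matrix.sub_mul, Matrix.mul_sub, trace_sub,
    Matrix.smul_mul, Matrix.mul_smul, trace_smul, Matrix.one_mul, Matrix.mul_one, hρ.2, smul_eq_mul]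
  ring

theorem kron_ind {m n : Type*} [Fintype m] [Fintype n] [DecidableEq m] [DecidableEq n]
    {P : Matrix (m × n) (m × n) ℂ → Prop}
    (h0 : P 0) (hadd : ∀ X Y, P X → P Y → P (X + Y))
    (hk : ∀ x y, P (x ⊗ₖ y)) (X : Matrix (m × n) (m × n) ℂ) : P X := by
  induction X using Matrix.induction_on' with
  | h_zero => exact h0
  | h_add X Y hX hY => exact hadd X Y hX hY
  | h_std_basis i j c =>
    have : Matrix.single i j c = (Matrix.single i.1 j.1 c) ⊗ₖ (Matrix.single i.2 j.2 (1:ℂ)) := by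
      rw [single_kronecker_single]; simp
    rw [this]; exact hk _ _

def red2 {d : ℕ} (ω : Matrix (Fin d) (Fin d) ℂ) (X : Matrix (D2 d) (D2 d) ℂ) :
    Matrix (Fin d) (Fin d) ℂ := ptrace₁ (X * (ω ⊗ₖ (1 : Matrix (Fin d) (Fin d) ℂ)))
def red1 {d : ℕ} (ω : Matrix (Fin d) (Fin d) ℂ) (X : Matrix (D2 d) (D2 d) ℂ) :
    Matrix (Fin d) (Fin d) ℂ := ptrace₂ (X * ((1 : Matrix (Fin d) (Fin d) ℂ) ⊗ₖ ω))

section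
variable {d : ℕ} (ω ω1 ω2 : Matrix (Fin d) (Fin d) ℂ)

theorem ptrace₁_kron (x y : Matrix (Fin d) (Fin d) ℂ) : ptrace₁ (x ⊗ₖ y) = x.trace • y := by
  ext i j; simp [ptrace₁, trace, Finset.sum_mul]
theorem ptrace₂_kron (x y : Matrix (Fin d) (Fin d) ℂ) : ptrace₂ (x ⊗ₖ y) = y.trace • x := by
  ext i j; simp [ptrace₂, trace, ← Finset.mul_sum, mul_comm]
theorem ptrace₁_add (X Y : Matrix (D2 d) (D2 d) ℂ) :
    ptrace₁ (X + Y) = ptrace₁ X + ptrace₁ Y := by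
  ext i j; simp [ptrace₁, Finset.sum_add_distrib]
theorem ptrace₂_add (X Y : Matrix (D2 d) (D2 d) ℂ) :
    ptrace₂ (X + Y) = ptrace₂ X + ptrace₂ Y := by
  ext i j; simp [ptrace₂, Finset.sum_add_distrib]
theorem ptrace₁_zero : ptrace₁ (0 : Matrix (D2 d) (D2 d) ℂ) = 0 := by
  ext i j; simp [ptrace₁]
theorem ptrace₂_zero : ptrace₂ (0 : Matrix (D2 d) (D2 d) ℂ) = 0 := by
  ext i j; simp [ptrace₂]
theorem red2_kron (x y : Matrix (Fin d) (Fin d) ℂ) :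
    red2 ω (x ⊗ₖ y) = (x * ω).trace • y := by
  rw [red2, ← mul_kronecker_mul, ptrace₁_kron, Matrix.mul_one]
theorem red1_kron (x y : Matrix (Fin d) (Fin d) ℂ) :
    red1 ω (x ⊗ₖ y) = (y * ω).trace • x := by
  rw [red1, ← mul_kronecker_mul, ptrace₂_kron, Matrix.mul_one]
theorem red2_add (X Y : Matrix (D2 d) (D2 d) ℂ) : red2 ω (X + Y) = red2 ω X + red2 ω Y := by
  rw [red2, Matrix.add_mul, ptrace₁_add]; rfl
theorem red1_add (X Y : Matrix (D2 d) (D2 d) ℂ) : red1 ω (X + Y) = red1 ω X + red1 ω Y := by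
  rw [red1, Matrix.add_mul, ptrace₂_add]; rfl
theorem red2_zero : red2 ω 0 = 0 := by rw [red2, Matrix.zero_mul, ptrace₁_zero]
theorem red1_zero : red1 ω 0 = 0 := by rw [red1, Matrix.zero_mul, ptrace₂_zero]

theorem red2_herm {ω : Matrix (Fin d) (Fin d) ℂ} (hω : ω.IsHermitian)
    (X : Matrix (D2 d) (D2 d) ℂ) (hX : X.IsHermitian) : (red2 ω X).IsHermitian := by
  have : ∀ X, (red2 ω X)ᴴ = red2 ω Xᴴ := by
    intro X
    induction X using kron_ind with
    | h0 => simp [red2_zero]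
    | hadd X Y hX hY => simp [red2_add, hX, hY]
    | hk x y =>
      rw [conjTranspose_kronecker, red2_kron, red2_kron, conjTranspose_smul,
        ← trace_conjTranspose, conjTranspose_mul, hω.eq, trace_mul_comm]
  rw [Matrix.IsHermitian, this, hX.eq]
theorem red1_herm {ω : Matrix (Fin d) (Fin d) ℂ} (hω : ω.IsHermitian)
    (X : Matrix (D2 d) (D2 d) ℂ) (hX : X.IsHermitian) : (red1 ω X).IsHermitian := by
  have : ∀ X, (red1 ω X)ᴴ = red1 ω Xᴴ := by
    intro X
    induction X using kron_ind with
    | h0 => simp [red1_zero]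
    | hadd X Y hX hY => simp [red1_add, hX, hY]
    | hk x y =>
      rw [conjTranspose_kronecker, red1_kron, red1_kron, conjTranspose_smul,
        ← trace_conjTranspose, conjTranspose_mul, hω.eq, trace_mul_comm]
  rw [Matrix.IsHermitian, this, hX.eq]

/-- `tr(X (u⊗1) σ)` and its mirror images. -/
theorem tr_red1 (X : Matrix (D2 d) (D2 d) ℂ) (u : Matrix (Fin d) (Fin d) ℂ) :
    (X * (u ⊗ₖ (1 : Matrix (Fin d) (Fin d) ℂ)) * (ω1 ⊗ₖ ω2)).trace
      = (red1 ω2 X * u * ω1).trace := by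
  induction X using kron_ind with
  | h0 => simp [red1_zero]
  | hadd X Y hX hY => simp [red1_add, Matrix.add_mul, hX, hY]
  | hk x y => simp [red1_kron, ← mul_kronecker_mul, trace_kronecker, mul_comm]
theorem tr_red1' (X : Matrix (D2 d) (D2 d) ℂ) (u : Matrix (Fin d) (Fin d) ℂ) :
    ((u ⊗ₖ (1 : Matrix (Fin d) (Fin d) ℂ)) * X * (ω1 ⊗ₖ ω2)).trace
      = (u * red1 ω2 X * ω1).trace := by
  induction X using kron_ind with
  | h0 => simp [red1_zero]
  | hadd X Y hX hY => simp [red1_add, Matrix.add_mul, Matrix.mul_add, hX, hY]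
  | hk x y => simp [red1_kron, ← mul_kronecker_mul, trace_kronecker, mul_comm]
theorem tr_red2 (X : Matrix (D2 d) (D2 d) ℂ) (u : Matrix (Fin d) (Fin d) ℂ) :
    (X * ((1 : Matrix (Fin d) (Fin d) ℂ) ⊗ₖ u) * (ω1 ⊗ₖ ω2)).trace
      = (red2 ω1 X * u * ω2).trace := by
  induction X using kron_ind with
  | h0 => simp [red2_zero]
  | hadd X Y hX hY => simp [red2_add, Matrix.add_mul, hX, hY]
  | hk x y => simp [red2_kron, ← mul_kronecker_mul, trace_kronecker]
theorem tr_red2' (X : Matrix (D2 d) (D2 d) ℂ) (u : Matrix (Fin d) (Fin d) ℂ) :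
    (((1 : Matrix (Fin d) (Fin d) ℂ) ⊗ₖ u) * X * (ω1 ⊗ₖ ω2)).trace
      = (u * red2 ω1 X * ω2).trace := by
  induction X using kron_ind with
  | h0 => simp [red2_zero]
  | hadd X Y hX hY => simp [red2_add, Matrix.add_mul, Matrix.mul_add, hX, hY]
  | hk x y => simp [red2_kron, ← mul_kronecker_mul, trace_kronecker]

theorem tr_red1_one (X : Matrix (D2 d) (D2 d) ℂ) :
    (red1 ω2 X * ω1).trace = (X * (ω1 ⊗ₖ ω2)).trace := by
  have := tr_red1 ω1 ω2 X 1
  simpa using this.symm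
theorem tr_red2_one (X : Matrix (D2 d) (D2 d) ℂ) :
    (red2 ω1 X * ω2).trace = (X * (ω1 ⊗ₖ ω2)).trace := by
  have := tr_red2 ω1 ω2 X 1
  simpa using this.symm

theorem ptrace₁_density {ρ : Matrix (D2 d) (D2 d) ℂ} (h : IsDensity ρ) :
    IsDensity (ptrace₁ ρ) := by
  constructor
  · have : ptrace₁ ρ = ∑ k : Fin d, ρ.submatrix (fun i => (k, i)) (fun i => (k, i)) := by
      ext i j; simp [ptrace₁, Matrix.sum_apply]
    rw [this]
    exact Matrix.posSemidef_sum _ fun k _ => h.1.submatrix _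
  · rw [← h.2]; simp only [trace, diag, ptrace₁, of_apply, Fintype.sum_prod_type]
    exact Finset.sum_comm
theorem ptrace₂_density {ρ : Matrix (D2 d) (D2 d) ℂ} (h : IsDensity ρ) :
    IsDensity (ptrace₂ ρ) := by
  constructor
  · have : ptrace₂ ρ = ∑ k : Fin d, ρ.submatrix (fun i => (i, k)) (fun i => (i, k)) := by
      ext i j; simp [ptrace₂, Matrix.sum_apply]
    rw [this]
    exact Matrix.posSemidef_sum _ fun k _ => h.1.submatrix _
  · rw [← h.2]; simp only [trace, diag, ptrace₂, of_apply, Fintype.sum_prod_type]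

end

/-- Heisenberg-picture channel. -/
def heis {a b l : Type*} [Fintype a] [Fintype l]
    (K : l → Matrix a b ℂ) (M : Matrix a a ℂ) : Matrix b b ℂ := ∑ i, (K i)ᴴ * M * K i

section heisenberg
variable {a b l : Type*} [Fintype a] [Fintype l]

theorem heis_herm (K : l → Matrix a b ℂ) {M : Matrix a a ℂ} (hM : M.IsHermitian) :
    (heis K M).IsHermitian := by
  rw [heis, Matrix.IsHermitian, conjTranspose_sum]
  refine Finset.sum_congr rfl fun i _ => ?_
  simp [conjTranspose_mul, hM.eq, Matrix.mul_assoc]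

theorem heis_one [DecidableEq a] [DecidableEq b] (K : l → Matrix a b ℂ)
    (hK : ∑ i, (K i)ᴴ * K i = 1) : heis K 1 = 1 := by
  simpa [heis] using hK

theorem heis_zero (K : l → Matrix a b ℂ) : heis K 0 = 0 := by
  simp [heis]
end heisenberg

/-- Residual matrix of one party. -/
def resid {d : ℕ} {ι a l : Type*} [Fintype a] [Fintype l] (K : l → Matrix a (D2 d) ℂ)
    (A : ι → Matrix a a ℂ) (ω1 ω2 : Matrix (Fin d) (Fin d) ℂ) : Matrix ι ι ℂ :=
  Matrix.of fun i j => (heis K (A i * A j) * (ω1 ⊗ₖ ω2)).trace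
    - (red1 ω2 (heis K (A i)) * red1 ω2 (heis K (A j)) * ω1).trace
    - (red2 ω1 (heis K (A i)) * red2 ω1 (heis K (A j)) * ω2).trace
    + (heis K (A i) * (ω1 ⊗ₖ ω2)).trace * (heis K (A j) * (ω1 ⊗ₖ ω2)).trace

theorem resid_psd {d : ℕ} {ι a l : Type*} [Fintype ι] [Fintype a] [Fintype l]
    (K : l → Matrix a (D2 d) ℂ) (hK : ∑ i, (K i)ᴴ * K i = 1)
    (A : ι → Matrix a a ℂ) (hA : ∀ i, (A i).IsHermitian) (ω1 ω2 : Matrix (Fin d) (Fin d) ℂ)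
    (h1 : IsDensity ω1) (h2 : IsDensity ω2) : (resid K A ω1 ω2).PosSemidef := by
  set σ := ω1 ⊗ₖ ω2 with hσ
  have hσp : σ.PosSemidef := h1.1.kronecker h2.1
  have hσt : σ.trace = 1 := by rw [hσ, trace_kronecker, h1.2, h2.2, mul_one]
  let W : ι → Matrix (D2 d) (D2 d) ℂ := fun i =>
    red1 ω2 (heis K (A i)) ⊗ₖ (1 : Matrix (Fin d) (Fin d) ℂ)
      + (1 : Matrix (Fin d) (Fin d) ℂ) ⊗ₖ red2 ω1 (heis K (A i))
      - (heis K (A i) * σ).trace • (1 : Matrix (D2 d) (D2 d) ℂ)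
  have hW : ∀ i, (W i)ᴴ = W i := by
    intro i
    have e1 := (red1_herm h2.1.isHermitian _ (heis_herm K (hA i))).eq
    have e2 := (red2_herm h1.1.isHermitian _ (heis_herm K (hA i))).eq
    have e3 := trace_real (heis_herm K (hA i)) hσp.isHermitian
    simp only [W, conjTranspose_sub, conjTranspose_add, conjTranspose_smul, conjTranspose_one,
      conjTranspose_kronecker, e1, e2, e3]
  have key : resid K A ω1 ω2 = ∑ t, Matrix.of fun i j =>
      ((A i * K t - K t * W i)ᴴ * (A j * K t - K t * W j) * σ).trace := by
    ext i j
    rw [Matrix.sum_apply]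
    simp only [of_apply]
    rw [← trace_sum, ← Matrix.sum_mul]
    have e : ∑ t, (A i * K t - K t * W i)ᴴ * (A j * K t - K t * W j)
        = heis K (A i * A j) - heis K (A i) * W j - W i * heis K (A j) + W i * W j := by
      have : W i * W j = W i * (∑ t, (K t)ᴴ * K t) * W j := by rw [hK, Matrix.mul_one]
      rw [this]
      simp only [heis, Matrix.sum_mul, Matrix.mul_sum, ← Finset.sum_sub_distrib,
        ← Finset.sum_add_distrib]
      refine Finset.sum_congr rfl fun t _ => ?_
      simp only [conjTranspose_sub, conjTranspose_mul, hW, (hA i).eq, Matrix.sub_mul,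
        Matrix.mul_sub, Matrix.mul_assoc]
      abel
    rw [e]
    simp only [resid, of_apply, Matrix.add_mul, Matrix.sub_mul, trace_add, trace_sub, ← hσ]
    have t1 : ∀ X, (X * W j * σ).trace = (red1 ω2 X * red1 ω2 (heis K (A j)) * ω1).trace
        + (red2 ω1 X * red2 ω1 (heis K (A j)) * ω2).trace
        - (heis K (A j) * σ).trace * (X * σ).trace := by
      intro X
      simp only [W, Matrix.mul_sub, Matrix.mul_add, Matrix.sub_mul, Matrix.add_mul, trace_add,
        trace_sub, hσ, tr_red1, tr_red2]
      simp
    have t2 : ∀ X, (W i * X * σ).trace = (red1 ω2 (heis K (A i)) * red1 ω2 X * ω1).trace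
        + (red2 ω1 (heis K (A i)) * red2 ω1 X * ω2).trace
        - (heis K (A i) * σ).trace * (X * σ).trace := by
      intro X
      simp only [W, Matrix.mul_sub, Matrix.mul_add, Matrix.sub_mul, Matrix.add_mul, trace_add,
        trace_sub, hσ, tr_red1', tr_red2']
      simp
    have t3 : (W i * W j * σ).trace = (W i * heis K (A j) * σ).trace := by
      have r1 : red1 ω2 (W j) = red1 ω2 (heis K (A j)) := by
        simp only [W, sub_eq_add_neg, red1_add, red1_kron]
        rw [← neg_smul, ← one_kronecker_one, ← smul_kronecker, red1_kron]
        rw [← tr_red2_one, Matrix.one_mul, h2.2]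
        simp
      have r2 : red2 ω1 (W j) = red2 ω1 (heis K (A j)) := by
        simp only [W, sub_eq_add_neg, red2_add, red2_kron]
        rw [← neg_smul, ← one_kronecker_one, ← kronecker_smul, red2_kron]
        rw [← tr_red1_one, Matrix.one_mul, h1.2]
        simp
      have r3 : (W j * σ).trace = (heis K (A j) * σ).trace := by
        rw [hσ, ← tr_red1_one, r1, tr_red1_one]
      rw [t2, t2, r1, r2, r3]
    rw [t3, t2, t1]
    ring
  rw [key]
  exact Matrix.posSemidef_sum _ fun t _ => gram_psd _ σ hσp

/-- Regrouping of the six factors into the three parties. -/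
def eTri (d : ℕ) : TriIdx d ≃ D2 d × (D2 d × D2 d) where
  toFun i := ((i.1.2, i.2.1.1), ((i.2.1.2, i.2.2.1), (i.2.2.2, i.1.1)))
  invFun o := ((o.2.2.2, o.1.1), ((o.1.2, o.2.1.1), (o.2.1.2, o.2.2.1)))
  left_inv _ := rfl
  right_inv _ := rfl

/-- Expectation of a product operator in the BTN state. -/
def T3 {d : ℕ} (ρa ρb ρc X Y Z : Matrix (D2 d) (D2 d) ℂ) : ℂ :=
  ((X ⊗ₖ (Y ⊗ₖ Z)).submatrix (eTri d) (eTri d) * btnState ρa ρb ρc).trace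

theorem globalKraus_eq {d nA nB nC : ℕ}
    (KA : Matrix (Fin nA) (D2 d) ℂ) (KB : Matrix (Fin nB) (D2 d) ℂ)
    (KC : Matrix (Fin nC) (D2 d) ℂ) :
    globalKraus KA KB KC = (KA ⊗ₖ (KB ⊗ₖ KC)).submatrix id (eTri d) := by
  ext o i
  simp [globalKraus, eTri, kroneckerMap_apply, mul_assoc]

theorem kron_sum_left {l m n p ι : Type*} [Fintype ι] (f : ι → Matrix l m ℂ) (Y : Matrix n p ℂ) :
    (∑ i, f i) ⊗ₖ Y = ∑ i, f i ⊗ₖ Y := by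
  ext a b
  simp [kroneckerMap_apply, Matrix.sum_apply, Finset.sum_mul]
theorem kron_sum_right {l m n p ι : Type*} [Fintype ι] (f : ι → Matrix l m ℂ) (Y : Matrix n p ℂ) :
    Y ⊗ₖ (∑ i, f i) = ∑ i, Y ⊗ₖ f i := by
  ext a b
  simp [kroneckerMap_apply, Matrix.sum_apply, Finset.mul_sum]
theorem submatrix_sum' {l m n p ι : Type*} [Fintype ι] (f : ι → Matrix l m ℂ) (e : n → l)
    (e' : p → m) :
    (∑ i, f i).submatrix e e' = ∑ i, (f i).submatrix e e' := by
  ext a b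
  simp [Matrix.sum_apply]

theorem trace_ctn {d nA nB nC LA LB LC : ℕ}
    (ρa ρb ρc : Matrix (D2 d) (D2 d) ℂ)
    (KA : Fin LA → Matrix (Fin nA) (D2 d) ℂ)
    (KB : Fin LB → Matrix (Fin nB) (D2 d) ℂ)
    (KC : Fin LC → Matrix (Fin nC) (D2 d) ℂ)
    (X : Matrix (Fin nA) (Fin nA) ℂ) (Y : Matrix (Fin nB) (Fin nB) ℂ)
    (Z : Matrix (Fin nC) (Fin nC) ℂ) :
    ((X ⊗ₖ (Y ⊗ₖ Z)) * ctnState ρa ρb ρc KA KB KC).trace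
      = T3 ρa ρb ρc (heis KA X) (heis KB Y) (heis KC Z) := by
  simp only [ctnState, T3, heis, Matrix.mul_sum, trace_sum, kron_sum_left, kron_sum_right,
    submatrix_sum', Matrix.sum_mul]
  have key : ∀ x y z, (X ⊗ₖ (Y ⊗ₖ Z) * (globalKraus (KA x) (KB y) (KC z) *
      btnState ρa ρb ρc * (globalKraus (KA x) (KB y) (KC z))ᴴ)).trace =
      ((((KA x)ᴴ * X * KA x) ⊗ₖ (((KB y)ᴴ * Y * KB y) ⊗ₖ ((KC z)ᴴ * Z * KC z))).submatrix
        (eTri d) (eTri d) * btnState ρa ρb ρc).trace := by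
    intro x y z
    rw [← Matrix.mul_assoc, trace_mul_comm, ← Matrix.mul_assoc, ← Matrix.mul_assoc]
    congr 2
    rw [globalKraus_eq, conjTranspose_submatrix, conjTranspose_kronecker,
      conjTranspose_kronecker]
    have : (X ⊗ₖ (Y ⊗ₖ Z)) = (X ⊗ₖ (Y ⊗ₖ Z)).submatrix (Equiv.refl _) (Equiv.refl _) := by simp
    rw [this]
    change submatrix _ _ (Equiv.refl _) * _ * submatrix _ (Equiv.refl _) _ = _
    rw [submatrix_mul_equiv, submatrix_mul_equiv, mul_kronecker_mul, mul_kronecker_mul,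
      mul_kronecker_mul, mul_kronecker_mul]
  simp only [key]
  -- match the order of summation
  refine Finset.sum_comm.trans (Eq.trans ?_ Finset.sum_comm)
  exact Finset.sum_congr rfl fun y _ => Finset.sum_comm

section T3lemmas
variable {d : ℕ} (ρa ρb ρc X Y Z : Matrix (D2 d) (D2 d) ℂ)

theorem T3_kron (x1 x2 y1 y2 z1 z2 : Matrix (Fin d) (Fin d) ℂ) :
    T3 ρa ρb ρc (x1 ⊗ₖ x2) (y1 ⊗ₖ y2) (z1 ⊗ₖ z2)
      = ((z2 ⊗ₖ x1) * ρb).trace * (((x2 ⊗ₖ y1) * ρc).trace * ((y2 ⊗ₖ z1) * ρa).trace) := by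
  have : ((x1 ⊗ₖ x2) ⊗ₖ ((y1 ⊗ₖ y2) ⊗ₖ (z1 ⊗ₖ z2))).submatrix (eTri d) (eTri d)
      = (z2 ⊗ₖ x1) ⊗ₖ ((x2 ⊗ₖ y1) ⊗ₖ (y2 ⊗ₖ z1)) := by
    ext p q
    simp only [eTri, submatrix_apply, kroneckerMap_apply, Equiv.coe_fn_mk]
    ring
  rw [T3, this, btnState, ← mul_kronecker_mul, ← mul_kronecker_mul, trace_kronecker,
    trace_kronecker]

theorem T3_addX (X' : Matrix (D2 d) (D2 d) ℂ) :
    T3 ρa ρb ρc (X + X') Y Z = T3 ρa ρb ρc X Y Z + T3 ρa ρb ρc X' Y Z := by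
  simp [T3, add_kronecker, submatrix_add, Matrix.add_mul]
theorem T3_addY (Y' : Matrix (D2 d) (D2 d) ℂ) :
    T3 ρa ρb ρc X (Y + Y') Z = T3 ρa ρb ρc X Y Z + T3 ρa ρb ρc X Y' Z := by
  simp [T3, add_kronecker, kronecker_add, submatrix_add, Matrix.add_mul]
theorem T3_addZ (Z' : Matrix (D2 d) (D2 d) ℂ) :
    T3 ρa ρb ρc X Y (Z + Z') = T3 ρa ρb ρc X Y Z + T3 ρa ρb ρc X Y Z' := by
  simp [T3, kronecker_add, submatrix_add, Matrix.add_mul]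
theorem T3_zeroX : T3 ρa ρb ρc 0 Y Z = 0 := by simp [T3]
theorem T3_zeroY : T3 ρa ρb ρc X 0 Z = 0 := by simp [T3]
theorem T3_zeroZ : T3 ρa ρb ρc X Y 0 = 0 := by simp [T3]

theorem tr_one_kron (ρ : Matrix (D2 d) (D2 d) ℂ) (u : Matrix (Fin d) (Fin d) ℂ) :
    (((1 : Matrix (Fin d) (Fin d) ℂ) ⊗ₖ u) * ρ).trace = (u * ptrace₁ ρ).trace := by
  rw [trace_mul_comm, trace_mul_comm u]
  induction ρ using kron_ind with
  | h0 => simp [ptrace₁_zero]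
  | hadd X Y hX hY => simp [ptrace₁_add, Matrix.add_mul, hX, hY]
  | hk x y => simp [ptrace₁_kron, ← mul_kronecker_mul, trace_kronecker]
theorem tr_kron_one (ρ : Matrix (D2 d) (D2 d) ℂ) (u : Matrix (Fin d) (Fin d) ℂ) :
    ((u ⊗ₖ (1 : Matrix (Fin d) (Fin d) ℂ)) * ρ).trace = (u * ptrace₂ ρ).trace := by
  rw [trace_mul_comm, trace_mul_comm u]
  induction ρ using kron_ind with
  | h0 => simp [ptrace₂_zero]
  | hadd X Y hX hY => simp [ptrace₂_add, Matrix.add_mul, hX, hY]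
  | hk x y => simp [ptrace₂_kron, ← mul_kronecker_mul, trace_kronecker, mul_comm]

theorem T3_XY : T3 ρa ρb ρc X Y 1
    = ((red2 (ptrace₁ ρb) X ⊗ₖ red1 (ptrace₂ ρa) Y) * ρc).trace := by
  induction X using kron_ind with
  | h0 => simp [T3_zeroX, red2_zero]
  | hadd X X' hX hX' => simp [T3_addX, red2_add, hX, hX', add_kronecker, Matrix.add_mul]
  | hk x1 x2 =>
    induction Y using kron_ind with
    | h0 => simp [T3_zeroY, red1_zero]
    | hadd Y Y' hY hY' => simp [T3_addY, red1_add, hY, hY', kronecker_add, Matrix.add_mul]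
    | hk y1 y2 =>
      rw [← one_kronecker_one, T3_kron, tr_one_kron, tr_kron_one, red2_kron, red1_kron]
      simp [smul_kronecker, kronecker_smul]
      ring
theorem T3_XZ : T3 ρa ρb ρc X 1 Z
    = ((red2 (ptrace₁ ρa) Z ⊗ₖ red1 (ptrace₂ ρc) X) * ρb).trace := by
  induction X using kron_ind with
  | h0 => simp [T3_zeroX, red1_zero]
  | hadd X X' hX hX' => simp [T3_addX, red1_add, hX, hX', kronecker_add, Matrix.add_mul]
  | hk x1 x2 =>
    induction Z using kron_ind with
    | h0 => simp [T3_zeroZ, red2_zero]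
    | hadd Y Y' hY hY' => simp [T3_addZ, red2_add, hY, hY', add_kronecker, Matrix.add_mul]
    | hk y1 y2 =>
      rw [← one_kronecker_one, T3_kron, tr_one_kron, tr_kron_one, red2_kron, red1_kron]
      simp [smul_kronecker, kronecker_smul]
      ring
theorem T3_YZ : T3 ρa ρb ρc 1 Y Z
    = ((red2 (ptrace₁ ρc) Y ⊗ₖ red1 (ptrace₂ ρb) Z) * ρa).trace := by
  induction Y using kron_ind with
  | h0 => simp [T3_zeroY, red2_zero]
  | hadd X X' hX hX' => simp [T3_addY, red2_add, hX, hX', add_kronecker, Matrix.add_mul]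
  | hk x1 x2 =>
    induction Z using kron_ind with
    | h0 => simp [T3_zeroZ, red1_zero]
    | hadd Y Y' hY hY' => simp [T3_addZ, red1_add, hY, hY', kronecker_add, Matrix.add_mul]
    | hk y1 y2 =>
      rw [← one_kronecker_one, T3_kron, tr_one_kron, tr_kron_one, red2_kron, red1_kron]
      simp [smul_kronecker, kronecker_smul]

theorem red1_one {ω : Matrix (Fin d) (Fin d) ℂ} (h : IsDensity ω) : red1 ω 1 = 1 := by
  rw [← one_kronecker_one, red1_kron, Matrix.one_mul, h.2, one_smul]
theorem red2_one {ω : Matrix (Fin d) (Fin d) ℂ} (h : IsDensity ω) : red2 ω 1 = 1 := by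
  rw [← one_kronecker_one, red2_kron, Matrix.one_mul, h.2, one_smul]

theorem T3_X (ha : IsDensity ρa) : T3 ρa ρb ρc X 1 1 = (X * (ptrace₁ ρb ⊗ₖ ptrace₂ ρc)).trace := by
  rw [T3_XY, red1_one (ptrace₂_density ha), tr_kron_one, tr_red2_one]
theorem T3_Y (hb : IsDensity ρb) : T3 ρa ρb ρc 1 Y 1 = (Y * (ptrace₁ ρc ⊗ₖ ptrace₂ ρa)).trace := by
  rw [T3_YZ, red1_one (ptrace₂_density hb), tr_kron_one, tr_red2_one]
theorem T3_Z (hc : IsDensity ρc) : T3 ρa ρb ρc 1 1 Z = (Z * (ptrace₁ ρa ⊗ₖ ptrace₂ ρb)).trace := by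
  rw [T3_XZ, red1_one (ptrace₂_density hc), tr_kron_one, tr_red2_one]
end T3lemmas

theorem outA_eq {nA nB nC : ℕ} (M : Matrix (Fin nA) (Fin nA) ℂ) :
    outA (nB := nB) (nC := nC) M = M ⊗ₖ ((1 : Matrix (Fin nB) (Fin nB) ℂ) ⊗ₖ
      (1 : Matrix (Fin nC) (Fin nC) ℂ)) := by
  rw [outA, one_kronecker_one]
theorem outB_eq {nA nB nC : ℕ} (M : Matrix (Fin nB) (Fin nB) ℂ) :
    outB (nA := nA) (nC := nC) M = (1 : Matrix (Fin nA) (Fin nA) ℂ) ⊗ₖ (M ⊗ₖ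
      (1 : Matrix (Fin nC) (Fin nC) ℂ)) := by
  ext p q
  by_cases h1 : p.1 = q.1 <;> by_cases h2 : p.2.2 = q.2.2 <;>
    simp [outB, kroneckerMap_apply, Matrix.one_apply, h1, h2]
theorem outC_eq {nA nB nC : ℕ} (M : Matrix (Fin nC) (Fin nC) ℂ) :
    outC (nA := nA) (nB := nB) M = (1 : Matrix (Fin nA) (Fin nA) ℂ) ⊗ₖ
      ((1 : Matrix (Fin nB) (Fin nB) ℂ) ⊗ₖ M) := rfl
theorem herm_kron {m n : Type*} {x : Matrix m m ℂ} {y : Matrix n n ℂ}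
    (hx : x.IsHermitian) (hy : y.IsHermitian) : (x ⊗ₖ y).IsHermitian := by
  rw [Matrix.IsHermitian, conjTranspose_kronecker, hx.eq, hy.eq]

/-- Block decomposition for covariance matrices of triangle
network states with local channels: `Γ(ρ_CTN) = S_c + S_b + S_a`, where each
summand is positive semidefinite, carries the corresponding off-diagonal block
`γ_E`, `γ_F`, `γ_G` of `Γ`, has Hermitian diagonal blocks `Υ`, and vanishes on
the remaining sector. -/
theorem stmt9 {d nA nB nC LA LB LC kA kB kC : ℕ} (hd : 1 ≤ d)
    (ρa ρb ρc : Matrix (D2 d) (D2 d) ℂ)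
    (hρa : IsDensity ρa) (hρb : IsDensity ρb) (hρc : IsDensity ρc)
    (KA : Fin LA → Matrix (Fin nA) (D2 d) ℂ)
    (KB : Fin LB → Matrix (Fin nB) (D2 d) ℂ)
    (KC : Fin LC → Matrix (Fin nC) (D2 d) ℂ)
    (hKA : ∑ l, (KA l)ᴴ * KA l = 1)
    (hKB : ∑ l, (KB l)ᴴ * KB l = 1)
    (hKC : ∑ l, (KC l)ᴴ * KC l = 1)
    (A : Fin kA → Matrix (Fin nA) (Fin nA) ℂ) (hA : ∀ i, (A i).IsHermitian)
    (B : Fin kB → Matrix (Fin nB) (Fin nB) ℂ) (hB : ∀ j, (B j).IsHermitian)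
    (C : Fin kC → Matrix (Fin nC) (Fin nC) ℂ) (hC : ∀ k, (C k).IsHermitian)
    (Γ : Matrix (Fin kA ⊕ (Fin kB ⊕ Fin kC)) (Fin kA ⊕ (Fin kB ⊕ Fin kC)) ℂ)
    (hΓ : Γ = covMat
      (Sum.elim (fun i => outA (A i))
        (Sum.elim (fun j => outB (B j)) (fun k => outC (C k))))
      (ctnState ρa ρb ρc KA KB KC)) :
    ∃ (ΥA1 ΥA2 : Matrix (Fin kA) (Fin kA) ℂ)
      (ΥB1 ΥB2 : Matrix (Fin kB) (Fin kB) ℂ)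
      (ΥC1 ΥC2 : Matrix (Fin kC) (Fin kC) ℂ),
      ΥA1.IsHermitian ∧ ΥA2.IsHermitian ∧ ΥB1.IsHermitian ∧ ΥB2.IsHermitian ∧
      ΥC1.IsHermitian ∧ ΥC2.IsHermitian ∧
      ∃ Sc Sb Sa :
          Matrix (Fin kA ⊕ (Fin kB ⊕ Fin kC)) (Fin kA ⊕ (Fin kB ⊕ Fin kC)) ℂ,
        -- S_c : diagonal blocks (Υ^A_2, Υ^B_1, 0), off-diagonal block γ_E
        (Sc = Matrix.of fun p q => match p, q with
          | Sum.inl m, Sum.inl m' => ΥA2 m m'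
          | Sum.inl m, Sum.inr (Sum.inl n) => Γ (Sum.inl m) (Sum.inr (Sum.inl n))
          | Sum.inr (Sum.inl n), Sum.inl m =>
              star (Γ (Sum.inl m) (Sum.inr (Sum.inl n)))
          | Sum.inr (Sum.inl n), Sum.inr (Sum.inl n') => ΥB1 n n'
          | _, _ => 0) ∧
        -- S_b : diagonal blocks (Υ^A_1, 0, Υ^C_2), off-diagonal block γ_F
        (Sb = Matrix.of fun p q => match p, q with
          | Sum.inl m, Sum.inl m' => ΥA1 m m'
          | Sum.inl m, Sum.inr (Sum.inr k) => Γ (Sum.inl m) (Sum.inr (Sum.inr k))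
          | Sum.inr (Sum.inr k), Sum.inl m =>
              star (Γ (Sum.inl m) (Sum.inr (Sum.inr k)))
          | Sum.inr (Sum.inr k), Sum.inr (Sum.inr k') => ΥC2 k k'
          | _, _ => 0) ∧
        -- S_a : diagonal blocks (0, Υ^B_2, Υ^C_1), off-diagonal block γ_G
        (Sa = Matrix.of fun p q => match p, q with
          | Sum.inr (Sum.inl n), Sum.inr (Sum.inl n') => ΥB2 n n'
          | Sum.inr (Sum.inl n), Sum.inr (Sum.inr k) =>
              Γ (Sum.inr (Sum.inl n)) (Sum.inr (Sum.inr k))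
          | Sum.inr (Sum.inr k), Sum.inr (Sum.inl n) =>
              star (Γ (Sum.inr (Sum.inl n)) (Sum.inr (Sum.inr k)))
          | Sum.inr (Sum.inr k), Sum.inr (Sum.inr k') => ΥC1 k k'
          | _, _ => 0) ∧
        Γ = Sc + Sb + Sa ∧
        Sc.PosSemidef ∧ Sb.PosSemidef ∧ Sa.PosSemidef := by
  have da1 := ptrace₁_density hρa
  have da2 := ptrace₂_density hρa
  have db1 := ptrace₁_density hρb
  have db2 := ptrace₂_density hρb
  have dc1 := ptrace₁_density hρc
  have dc2 := ptrace₂_density hρc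
  -- reduced observables
  let xA1 := fun i => red1 (ptrace₂ ρc) (heis KA (A i))
  let xA2 := fun i => red2 (ptrace₁ ρb) (heis KA (A i))
  let xB1 := fun i => red1 (ptrace₂ ρa) (heis KB (B i))
  let xB2 := fun i => red2 (ptrace₁ ρc) (heis KB (B i))
  let xC1 := fun i => red1 (ptrace₂ ρb) (heis KC (C i))
  let xC2 := fun i => red2 (ptrace₁ ρa) (heis KC (C i))
  have hA1 : ∀ i, (xA1 i).IsHermitian := fun i =>
    red1_herm dc2.1.isHermitian _ (heis_herm KA (hA i))
  have hA2 : ∀ i, (xA2 i).IsHermitian := fun i =>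
    red2_herm db1.1.isHermitian _ (heis_herm KA (hA i))
  have hB1 : ∀ i, (xB1 i).IsHermitian := fun i =>
    red1_herm da2.1.isHermitian _ (heis_herm KB (hB i))
  have hB2 : ∀ i, (xB2 i).IsHermitian := fun i =>
    red2_herm dc1.1.isHermitian _ (heis_herm KB (hB i))
  have hC1 : ∀ i, (xC1 i).IsHermitian := fun i =>
    red1_herm db2.1.isHermitian _ (heis_herm KC (hC i))
  have hC2 : ∀ i, (xC2 i).IsHermitian := fun i =>
    red2_herm da1.1.isHermitian _ (heis_herm KC (hC i))
  let I : Matrix (Fin d) (Fin d) ℂ := 1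
  have hI : I.IsHermitian := isHermitian_one
  obtain ⟨Mc, hMc⟩ : ∃ Mc : Fin kA ⊕ (Fin kB ⊕ Fin kC) → Matrix (D2 d) (D2 d) ℂ,
    Mc = Sum.elim (fun i => xA2 i ⊗ₖ I) (Sum.elim (fun j => I ⊗ₖ xB1 j) (fun _ => 0)) := ⟨_, rfl⟩
  obtain ⟨Mb, hMb⟩ : ∃ Mb : Fin kA ⊕ (Fin kB ⊕ Fin kC) → Matrix (D2 d) (D2 d) ℂ,
    Mb = Sum.elim (fun i => I ⊗ₖ xA1 i) (Sum.elim (fun _ => 0) (fun k => xC2 k ⊗ₖ I)) := ⟨_, rfl⟩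
  obtain ⟨Ma, hMa⟩ : ∃ Ma : Fin kA ⊕ (Fin kB ⊕ Fin kC) → Matrix (D2 d) (D2 d) ℂ,
    Ma = Sum.elim (fun _ => 0) (Sum.elim (fun j => xB2 j ⊗ₖ I) (fun k => I ⊗ₖ xC1 k)) := ⟨_, rfl⟩
  obtain ⟨RA, hRA⟩ : ∃ RA : Matrix (Fin kA ⊕ (Fin kB ⊕ Fin kC)) (Fin kA ⊕ (Fin kB ⊕ Fin kC)) ℂ,
    RA = resid KA (Sum.elim A (fun _ => 0)) (ptrace₁ ρb) (ptrace₂ ρc) := ⟨_, rfl⟩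
  obtain ⟨RB, hRB⟩ : ∃ RB : Matrix (Fin kA ⊕ (Fin kB ⊕ Fin kC)) (Fin kA ⊕ (Fin kB ⊕ Fin kC)) ℂ,
    RB = resid KB (Sum.elim (fun _ => 0) (Sum.elim B (fun _ => 0))) (ptrace₁ ρc) (ptrace₂ ρa) :=
    ⟨_, rfl⟩
  obtain ⟨RC, hRC⟩ : ∃ RC : Matrix (Fin kA ⊕ (Fin kB ⊕ Fin kC)) (Fin kA ⊕ (Fin kB ⊕ Fin kC)) ℂ,
    RC = resid KC (Sum.elim (fun _ => 0) (Sum.elim (fun _ => 0) C)) (ptrace₁ ρa) (ptrace₂ ρb) :=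
    ⟨_, rfl⟩
  have pc : (covMat Mc ρc + RA).PosSemidef := by
    refine (cov_psd _ ?_ _ hρc).add ?_
    · rw [hMc]
      rintro (i | j | k)
      · exact herm_kron (hA2 i) hI
      · exact herm_kron hI (hB1 j)
      · exact isHermitian_zero
    · rw [hRA]
      refine resid_psd _ hKA _ ?_ _ _ db1 dc2
      rintro (i | j | k)
      exacts [hA i, isHermitian_zero, isHermitian_zero]
  have pb : (covMat Mb ρb + RC).PosSemidef := by
    refine (cov_psd _ ?_ _ hρb).add ?_
    · rw [hMb]
      rintro (i | j | k)
      · exact herm_kron hI (hA1 i)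
      · exact isHermitian_zero
      · exact herm_kron (hC2 k) hI
    · rw [hRC]
      refine resid_psd _ hKC _ ?_ _ _ da1 db2
      rintro (i | j | k)
      exacts [isHermitian_zero, isHermitian_zero, hC k]
  have pa : (covMat Ma ρa + RB).PosSemidef := by
    refine (cov_psd _ ?_ _ hρa).add ?_
    · rw [hMa]
      rintro (i | j | k)
      · exact isHermitian_zero
      · exact herm_kron (hB2 j) hI
      · exact herm_kron hI (hC1 k)
    · rw [hRB]
      refine resid_psd _ hKB _ ?_ _ _ dc1 da2
      rintro (i | j | k)
      exacts [isHermitian_zero, hB j, isHermitian_zero]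
  have heA := heis_one KA hKA
  have heB := heis_one KB hKB
  have heC := heis_one KC hKC
  have hsum : ∀ p q, Γ p q = (covMat Mc ρc + RA) p q + (covMat Mb ρb + RC) p q
      + (covMat Ma ρa + RB) p q := by
    rw [hΓ, hMc, hMb, hMa, hRA, hRB, hRC]
    rintro (i | i | i) (j | j | j) <;>
    simp only [covMat, resid, xA1, xA2, xB1, xB2, xC1, xC2, I, Matrix.add_apply, of_apply,
      Sum.elim_inl, Sum.elim_inr, outA_eq, outB_eq, outC_eq, ← mul_kronecker_mul, Matrix.one_mul,
      Matrix.mul_one, trace_ctn, heA, heB, heC, T3_X _ _ _ _ hρa, T3_Y _ _ _ _ hρb,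
      T3_Z _ _ _ _ hρc, T3_XY, T3_XZ, T3_YZ, Matrix.zero_mul, Matrix.mul_zero, trace_zero,
      heis_zero, red1_zero, red2_zero, tr_one_kron, tr_kron_one, tr_red1_one, tr_red2_one] <;>
    ring
  have zc : ∀ p q, (∃ k, p = Sum.inr (Sum.inr k) ∨ q = Sum.inr (Sum.inr k)) →
      (covMat Mc ρc + RA) p q = 0 := by
    rw [hMc, hRA]
    rintro p q ⟨k, rfl | rfl⟩ <;>
    simp [covMat, resid, heis_zero, red1_zero, red2_zero]
  have zb : ∀ p q, (∃ k, p = Sum.inr (Sum.inl k) ∨ q = Sum.inr (Sum.inl k)) →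
      (covMat Mb ρb + RC) p q = 0 := by
    rw [hMb, hRC]
    rintro p q ⟨k, rfl | rfl⟩ <;>
    simp [covMat, resid, heis_zero, red1_zero, red2_zero]
  have za : ∀ p q, (∃ k, p = Sum.inl k ∨ q = Sum.inl k) →
      (covMat Ma ρa + RB) p q = 0 := by
    rw [hMa, hRB]
    rintro p q ⟨k, rfl | rfl⟩ <;>
    simp [covMat, resid, heis_zero, red1_zero, red2_zero]
  generalize covMat Mc ρc + RA = Sc at *
  generalize covMat Mb ρb + RC = Sb at *
  generalize covMat Ma ρa + RB = Sa at *
  have hc := pc.isHermitian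
  have hb := pb.isHermitian
  have ha := pa.isHermitian
  refine ⟨Sb.submatrix Sum.inl Sum.inl, Sc.submatrix Sum.inl Sum.inl,
    Sc.submatrix (Sum.inr ∘ Sum.inl) (Sum.inr ∘ Sum.inl),
    Sa.submatrix (Sum.inr ∘ Sum.inl) (Sum.inr ∘ Sum.inl),
    Sa.submatrix (Sum.inr ∘ Sum.inr) (Sum.inr ∘ Sum.inr),
    Sb.submatrix (Sum.inr ∘ Sum.inr) (Sum.inr ∘ Sum.inr),
    hb.submatrix _, hc.submatrix _, hc.submatrix _, ha.submatrix _, ha.submatrix _,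
    hb.submatrix _, Sc, Sb, Sa, ?_, ?_, ?_, ?_, pc, pb, pa⟩
  · ext (i | i | i) (j | j | j)
    · rfl
    · simp only [of_apply, hsum]
      rw [zb _ _ ⟨j, Or.inr rfl⟩, za _ _ ⟨i, Or.inl rfl⟩, add_zero, add_zero]
    · exact zc _ _ ⟨j, Or.inr rfl⟩
    · simp only [of_apply, hsum]
      rw [zb _ _ ⟨i, Or.inr rfl⟩, za _ _ ⟨j, Or.inl rfl⟩, add_zero, add_zero, hc.apply]
    · rfl
    · exact zc _ _ ⟨j, Or.inr rfl⟩
    · exact zc _ _ ⟨i, Or.inl rfl⟩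
    · exact zc _ _ ⟨i, Or.inl rfl⟩
    · exact zc _ _ ⟨i, Or.inl rfl⟩
  · ext (i | i | i) (j | j | j)
    · rfl
    · exact zb _ _ ⟨j, Or.inr rfl⟩
    · simp only [of_apply, hsum]
      rw [zc _ _ ⟨j, Or.inr rfl⟩, za _ _ ⟨i, Or.inl rfl⟩, add_zero, zero_add]
    · exact zb _ _ ⟨i, Or.inl rfl⟩
    · exact zb _ _ ⟨i, Or.inl rfl⟩
    · exact zb _ _ ⟨i, Or.inl rfl⟩
    · simp only [of_apply, hsum]
      rw [zc _ _ ⟨i, Or.inr rfl⟩, za _ _ ⟨j, Or.inl rfl⟩, add_zero, zero_add, hb.apply]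
    · exact zb _ _ ⟨j, Or.inr rfl⟩
    · rfl
  · ext (i | i | i) (j | j | j)
    · exact za _ _ ⟨i, Or.inl rfl⟩
    · exact za _ _ ⟨i, Or.inl rfl⟩
    · exact za _ _ ⟨i, Or.inl rfl⟩
    · exact za _ _ ⟨j, Or.inr rfl⟩
    · rfl
    · simp only [of_apply, hsum]
      rw [zc _ _ ⟨j, Or.inr rfl⟩, zb _ _ ⟨i, Or.inl rfl⟩, zero_add, zero_add]
    · exact za _ _ ⟨j, Or.inr rfl⟩
    · simp only [of_apply, hsum]
      rw [zc _ _ ⟨i, Or.inr rfl⟩, zb _ _ ⟨j, Or.inl rfl⟩, zero_add, zero_add, ha.apply]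
    · rfl
  · ext p q
    exact hsum p q
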